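/- Assume ‖θ‖_T > 0, 0 < ζ < 1 − F_α(|q_α| + ‖θ‖_T) e^{‖θ‖_T²}, and |q_α| ≥ max(1, 2(T+1)‖θ‖_T). Let γ₁ be a maximizer of Γ₁ over [0,ζ] and ν* = (ỹ^{1,γ₁}, v^{γ₁}). Then ν* ∈ U, ν* satisfies the ES constraint at level ζ, J(x,ν*) = A(x) + Γ₁(γ₁), and J(x,ν) ≤ A(x) + Γ₁(γ₁) for every ν ∈ U satisfying the ES constraint at level ζ. -/

import Mathlib

open MeasureTheory Real Set Filter
open scoped RealInnerProductSpace ENNReal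

noncomputable section

abbrev E (d : ℕ) := EuclideanSpace ℝ (Fin d)

/-- ω(t) = T − t + 1 -/
def om (T t : ℝ) : ℝ := T - t + 1

/-- running L²-norm ‖y‖_t = (∫₀^t |y_s|² ds)^{1/2} -/
def nrm {d : ℕ} (y : ℝ → E d) (t : ℝ) : ℝ :=
  Real.sqrt (∫ s in Set.Ioc (0:ℝ) t, ‖y s‖ ^ 2)

/-- running inner product (y,θ)_t = ∫₀^t y_s'θ_s ds -/
def ipr {d : ℕ} (y θ : ℝ → E d) (t : ℝ) : ℝ :=
  ∫ s in Set.Ioc (0:ℝ) t, ⟪y s, θ s⟫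

/-- membership in L²([0,T];ℝ^d) -/
def L2fun {d : ℕ} (T : ℝ) (y : ℝ → E d) : Prop :=
  Measurable y ∧ IntegrableOn (fun t => ‖y t‖ ^ 2) (Set.Ioc 0 T)

def k1 {d : ℕ} (T : ℝ) (θ : ℝ → E d) : ℝ :=
  ∫ t in Set.Ioc (0:ℝ) T, om T t * ‖θ t‖ ^ 2

def k2 {d : ℕ} (T : ℝ) (θ : ℝ → E d) : ℝ :=
  ∫ t in Set.Ioc (0:ℝ) T, om T t ^ 2 * ‖θ t‖ ^ 2

/-- Mills ratio ϖ(z) = e^{z²/2}∫_z^∞ e^{-s²/2} ds -/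
def mills (z : ℝ) : ℝ := Real.exp (z ^ 2 / 2) * ∫ s in Set.Ioi z, Real.exp (-s ^ 2 / 2)

/-- ι_α(u) = 1/ϖ(u + |q_α|) − u -/
def iotaA (qa u : ℝ) : ℝ := 1 / mills (u + |qa|) - u

/-- F_α(z) = (∫_z^∞ e^{-s²/2} ds)/(∫_{|q_α|}^∞ e^{-s²/2} ds) -/
def Fal (qa z : ℝ) : ℝ :=
  (∫ s in Set.Ioi z, Real.exp (-s ^ 2 / 2)) / ∫ s in Set.Ioi |qa|, Real.exp (-s ^ 2 / 2)

/-- f_α(x) = ln F_α(|q_α| + x) -/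
def fal (qa x : ℝ) : ℝ := Real.log (Fal qa (|qa| + x))

/-- G₁(u,λ) -/
def G1fun {d : ℕ} (T : ℝ) (θ : ℝ → E d) (qa u lam : ℝ) : ℝ :=
  ∫ t in Set.Ioc (0:ℝ) T,
    (om T t + lam) ^ 2 * ‖θ t‖ ^ 2 / (lam * iotaA qa u + u * (om T t + lam)) ^ 2

open Classical in
/-- ρ₁(λ) = inf{u ≥ 0 : G₁(u,λ) ≤ 1}, with value +∞ if no such u exists -/
def rho1 {d : ℕ} (T : ℝ) (θ : ℝ → E d) (qa lam : ℝ) : ℝ≥0∞ :=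
  if {u : ℝ | 0 ≤ u ∧ G1fun T θ qa u lam ≤ 1}.Nonempty then
    ENNReal.ofReal (sInf {u : ℝ | 0 ≤ u ∧ G1fun T θ qa u lam ≤ 1})
  else ⊤

open Classical in
/-- ς_λ(t), with ς_λ ≡ 1 if ρ₁(λ) = +∞ -/
def sig {d : ℕ} (T : ℝ) (θ : ℝ → E d) (qa lam t : ℝ) : ℝ :=
  if rho1 T θ qa lam = ⊤ then 1
  else (rho1 T θ qa lam).toReal * (om T t + lam) /
    (lam * iotaA qa (rho1 T θ qa lam).toReal + (rho1 T θ qa lam).toReal * (om T t + lam))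

def lamMax' {d : ℕ} (T : ℝ) (θ : ℝ → E d) (qa : ℝ) : ℝ :=
  (k1 T θ + Real.sqrt (k2 T θ * (iotaA qa 0 ^ 2 - nrm θ T ^ 2) + k1 T θ ^ 2)) /
    (iotaA qa 0 ^ 2 - nrm θ T ^ 2)

/-- Φ₁(λ) = −∫₀^T ς_λ(t)|θ_t|² dt − ln F_α(|q_α| + ‖ς_λθ‖_T) -/
def Phi1 {d : ℕ} (T : ℝ) (θ : ℝ → E d) (qa lam : ℝ) : ℝ :=
  -(∫ t in Set.Ioc (0:ℝ) T, sig T θ qa lam t * ‖θ t‖ ^ 2)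
    - Real.log (Fal qa (|qa| + nrm (fun t => sig T θ qa lam t • θ t) T))

/-- cumulated consumption V_t = ∫₀^t v_s ds -/
def Vtot (v : ℝ → ℝ) (t : ℝ) : ℝ := ∫ s in Set.Ioc (0:ℝ) t, v s

/-- the set U of admissible deterministic strategies -/
def Admiss {d : ℕ} (T : ℝ) (y : ℝ → E d) (v : ℝ → ℝ) : Prop :=
  Measurable y ∧ IntegrableOn (fun t => ‖y t‖ ^ 2) (Set.Ioc 0 T) ∧
    Measurable v ∧ (∀ t ∈ Set.Icc (0:ℝ) T, 0 < v t) ∧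
    IntegrableOn v (Set.Ioc 0 T) ∧
    IntegrableOn (fun t => max (-Real.log (v t)) 0) (Set.Ioc 0 T)

/-- the cost J(x,ν) -/
def Jcost {d : ℕ} (T x : ℝ) (r : ℝ → ℝ) (θ y : ℝ → E d) (v : ℝ → ℝ) : ℝ :=
  (T + 1) * Real.log x
    + (∫ t in Set.Ioc (0:ℝ) T, om T t * (r t + ⟪y t, θ t⟫ - ‖y t‖ ^ 2 / 2))
    + (∫ t in Set.Ioc (0:ℝ) T, (Real.log (v t) - Vtot v t))
    - Vtot v T

/-- A(x) = (T+1)ln x + ∫₀^T ω(t)r_t dt − T ln T -/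
def Aconst (T x : ℝ) (r : ℝ → ℝ) : ℝ :=
  (T + 1) * Real.log x + (∫ t in Set.Ioc (0:ℝ) T, om T t * r t) - T * Real.log T

/-- v^κ_t = κ/(T − tκ) -/
def vk (T k t : ℝ) : ℝ := k / (T - t * k)

/-- the VaR constraint at level ζ -/
def VaROK {d : ℕ} (T : ℝ) (θ y : ℝ → E d) (v : ℝ → ℝ) (qa z : ℝ) : Prop :=
  ∀ t ∈ Set.Icc (0:ℝ) T,
    Real.log (1 - z) ≤ ipr y θ t - nrm y t ^ 2 / 2 - Vtot v t - |qa| * nrm y t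

/-- the ES constraint at level ζ -/
def ESOK {d : ℕ} (T : ℝ) (θ y : ℝ → E d) (v : ℝ → ℝ) (qa z : ℝ) : Prop :=
  ∀ t ∈ Set.Icc (0:ℝ) T,
    Real.log (1 - z) ≤ ipr y θ t - Vtot v t + fal qa (nrm y t)

/-- Γ₁(κ), where φ₁(κ) = Φ₁⁻¹(ln((1−κ)/(1−ζ))) -/
def Gam1 {d : ℕ} (T : ℝ) (θ : ℝ → E d) (qa z : ℝ) (Finv : ℝ → ℝ) (k : ℝ) : ℝ :=
  Real.log (1 - k) + T * Real.log k +
    ∫ t in Set.Ioc (0:ℝ) T, om T t * ‖θ t‖ ^ 2 *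
      (sig T θ qa (Finv (Real.log ((1 - k) / (1 - z)))) t
        - sig T θ qa (Finv (Real.log ((1 - k) / (1 - z)))) t ^ 2 / 2)

/-- the candidate optimal ES investment strategy ỹ^{1,κ} -/
def ystarE {d : ℕ} (T : ℝ) (θ : ℝ → E d) (qa z : ℝ) (Finv : ℝ → ℝ) (k : ℝ) : ℝ → E d :=
  fun t => sig T θ qa (Finv (Real.log ((1 - k) / (1 - z)))) t • θ t

open scoped Topology

/-- The Gaussian tail integral `∫_z^∞ e^{-s²/2} ds`. -/
def gaussTail (z : ℝ) : ℝ := ∫ s in Ioi z, exp (-s ^ 2 / 2)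

/-- The hazard rate of the Gaussian law, the reciprocal of the Mills ratio. -/
def hazard (z : ℝ) : ℝ := exp (-z ^ 2 / 2) / gaussTail z

lemma integrable_gauss : Integrable fun s : ℝ => exp (-s ^ 2 / 2) := by
  have h := integrable_exp_neg_mul_sq (b := 1 / 2) (by norm_num)
  refine h.congr (Eventually.of_forall fun s => ?_)
  simp only
  congr 1
  ring

lemma hasDerivAt_gauss (z : ℝ) :
    HasDerivAt (fun s : ℝ => exp (-s ^ 2 / 2)) (-z * exp (-z ^ 2 / 2)) z := by
  have h := (((hasDerivAt_id z).pow 2).neg.div_const 2).exp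
  simp only [id, Pi.neg_apply, Pi.pow_apply] at h
  refine h.congr_deriv ?_
  norm_num
  ring

lemma gaussTail_pos (z : ℝ) : 0 < gaussTail z := by
  refine (setIntegral_pos_iff_support_of_nonneg_ae
    (Eventually.of_forall fun s => (exp_pos _).le) integrable_gauss.integrableOn).2 ?_
  have : (Function.support fun s : ℝ => exp (-s ^ 2 / 2)) = univ := by
    ext s
    simp [(exp_pos (-s ^ 2 / 2)).ne']
  rw [this]
  simp

lemma hasDerivAt_gaussTail (z : ℝ) : HasDerivAt gaussTail (-exp (-z ^ 2 / 2)) z := by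
  have h1 : gaussTail = fun z => gaussTail 0 - ∫ s in (0 : ℝ)..z, exp (-s ^ 2 / 2) := by
    funext z
    have := intervalIntegral.integral_Ioi_sub_Ioi' (μ := volume) (a := (0 : ℝ)) (b := z)
      (f := fun s => exp (-s ^ 2 / 2)) integrable_gauss.integrableOn integrable_gauss.integrableOn
    unfold gaussTail
    linarith
  rw [h1]
  have hc : Continuous fun s : ℝ => exp (-s ^ 2 / 2) := by fun_prop
  exact (hc.integral_hasStrictDerivAt 0 z).hasDerivAt.const_sub _

lemma tendsto_gauss_atTop : Tendsto (fun s : ℝ => exp (-s ^ 2 / 2)) atTop (𝓝 0) := by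
  refine tendsto_exp_atBot.comp ?_
  have : (fun s : ℝ => -s ^ 2 / 2) = fun s => -(s ^ 2 / 2) := by
    funext s; ring
  rw [this]
  exact tendsto_neg_atTop_atBot.comp
    ((tendsto_pow_atTop (by norm_num)).atTop_div_const (by norm_num))

lemma tendsto_gaussTail_atTop : Tendsto gaussTail atTop (𝓝 0) := by
  have h := intervalIntegral_tendsto_integral_Ioi (μ := volume) (0 : ℝ)
    (integrable_gauss.integrableOn (s := Ioi 0)) tendsto_id
  have h2 := (tendsto_const_nhds (x := gaussTail 0)).sub h
  have h3 : gaussTail 0 - ∫ s in Ioi (0 : ℝ), exp (-s ^ 2 / 2) = 0 := sub_self _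
  rw [h3] at h2
  refine h2.congr fun z => ?_
  have := intervalIntegral.integral_Ioi_sub_Ioi' (μ := volume) (a := (0 : ℝ)) (b := z)
    (f := fun s => exp (-s ^ 2 / 2)) integrable_gauss.integrableOn integrable_gauss.integrableOn
  simp only [id]
  unfold gaussTail
  linarith

lemma nonneg_of_hasDerivAt_nonpos_of_tendsto {f f' : ℝ → ℝ}
    (hf : ∀ z, 0 < z → HasDerivAt f (f' z) z) (hf' : ∀ z, 0 < z → f' z ≤ 0)
    (hlim : Tendsto f atTop (𝓝 0)) {z : ℝ} (hz : 0 < z) : 0 ≤ f z := by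
  have hanti : AntitoneOn f (Ioi 0) := by
    refine antitoneOn_of_hasDerivWithinAt_nonpos (f' := f') (convex_Ioi 0)
      (fun x hx => (hf x hx).continuousAt.continuousWithinAt) ?_ ?_
    · intro x hx
      rw [interior_Ioi] at hx ⊢
      exact (hf x hx).hasDerivWithinAt
    · intro x hx
      rw [interior_Ioi] at hx
      exact hf' x hx
  refine le_of_tendsto hlim ?_
  filter_upwards [eventually_ge_atTop z] with w hw
  exact hanti hz (hz.trans_le hw) hw

lemma gaussTail_mul_le {z : ℝ} (hz : 0 < z) : z * gaussTail z ≤ exp (-z ^ 2 / 2) := by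
  have key := nonneg_of_hasDerivAt_nonpos_of_tendsto
    (f := fun z => exp (-z ^ 2 / 2) * z⁻¹ - gaussTail z)
    (f' := fun z => -exp (-z ^ 2 / 2) / z ^ 2) ?_ ?_ ?_ hz
  · have : z * (exp (-z ^ 2 / 2) * z⁻¹) = exp (-z ^ 2 / 2) := by field_simp
    nlinarith
  · intro w hw
    refine (((hasDerivAt_gauss w).mul (hasDerivAt_inv hw.ne')).sub
      (hasDerivAt_gaussTail w)).congr_deriv ?_
    field_simp
    ring
  · intro w hw
    rw [neg_div]
    exact neg_nonpos.2 (by positivity)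
  · simpa using (tendsto_gauss_atTop.mul tendsto_inv_atTop_zero).sub tendsto_gaussTail_atTop

lemma mul_gauss_le_gaussTail {z : ℝ} (hz : 0 < z) :
    z * exp (-z ^ 2 / 2) ≤ (1 + z ^ 2) * gaussTail z := by
  have key := nonneg_of_hasDerivAt_nonpos_of_tendsto
    (f := fun z => gaussTail z - z / (1 + z ^ 2) * exp (-z ^ 2 / 2))
    (f' := fun z => -(2 * exp (-z ^ 2 / 2)) / (1 + z ^ 2) ^ 2) ?_ ?_ ?_ hz
  · have h2 : (1 + z ^ 2) * (z / (1 + z ^ 2) * exp (-z ^ 2 / 2)) = z * exp (-z ^ 2 / 2) := by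
      field_simp
    nlinarith [sq_nonneg z]
  · intro w hw
    have h1 : HasDerivAt (fun z : ℝ => z / (1 + z ^ 2))
        ((1 * (1 + w ^ 2) - w * (2 * w)) / (1 + w ^ 2) ^ 2) w := by
      refine (hasDerivAt_id w).div ?_ (by positivity)
      refine (((hasDerivAt_id w).pow 2).const_add 1).congr_deriv ?_
      simp
    refine ((hasDerivAt_gaussTail w).sub (h1.mul (hasDerivAt_gauss w))).congr_deriv ?_
    field_simp
    ring
  · intro w hw
    rw [neg_div]
    exact neg_nonpos.2 (by positivity)
  · have h0 : Tendsto (fun z : ℝ => z / (1 + z ^ 2) * exp (-z ^ 2 / 2)) atTop (𝓝 0) := by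
      refine squeeze_zero' ?_ ?_ tendsto_gauss_atTop
      · filter_upwards [eventually_ge_atTop 0] with w hw
        positivity
      · filter_upwards [eventually_ge_atTop 0] with w hw
        refine mul_le_of_le_one_left (exp_pos _).le ?_
        rw [div_le_one (by positivity)]
        nlinarith [sq_nonneg (w - 1)]
    simpa using tendsto_gaussTail_atTop.sub h0

lemma hazard_pos (z : ℝ) : 0 < hazard z := div_pos (exp_pos _) (gaussTail_pos z)

lemma le_hazard {z : ℝ} (hz : 0 < z) : z ≤ hazard z :=
  (le_div_iff₀ (gaussTail_pos z)).2 (gaussTail_mul_le hz)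

lemma mul_hazard_le {z : ℝ} (hz : 0 < z) : z * hazard z ≤ 1 + z ^ 2 := by
  rw [hazard, ← mul_div_assoc, div_le_iff₀ (gaussTail_pos z)]
  exact mul_gauss_le_gaussTail hz

lemma hasDerivAt_hazard (z : ℝ) : HasDerivAt hazard (hazard z * (hazard z - z)) z := by
  have hz := (gaussTail_pos z).ne'
  refine ((hasDerivAt_gauss z).div (hasDerivAt_gaussTail z) hz).congr_deriv ?_
  simp only [hazard]
  field_simp
  ring

lemma monotoneOn_hazard : MonotoneOn hazard (Ioi 0) := by
  refine monotoneOn_of_hasDerivWithinAt_nonneg (f' := fun z => hazard z * (hazard z - z))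
    (convex_Ioi 0) (fun x _ => (hasDerivAt_hazard x).continuousAt.continuousWithinAt)
    (fun x _ => (hasDerivAt_hazard x).hasDerivWithinAt) ?_
  intro x hx
  rw [interior_Ioi] at hx
  exact mul_nonneg (hazard_pos x).le (sub_nonneg.2 (le_hazard hx))

/-- The map `x ↦ x / hazard (q + x)` is nondecreasing on the half-line. -/
lemma mul_hazard_le_mul_hazard {q x y : ℝ} (hq : 0 < q) (hx : 0 ≤ x) (hxy : x ≤ y) :
    x * hazard (q + y) ≤ y * hazard (q + x) := by
  have hmono : MonotoneOn (fun x => x / hazard (q + x)) (Ici 0) := by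
    have hd : ∀ x, HasDerivAt (fun x => x / hazard (q + x))
        ((1 * hazard (q + x) - x * (hazard (q + x) * (hazard (q + x) - (q + x)))) /
          hazard (q + x) ^ 2) x := fun x =>
      (hasDerivAt_id x).div ((hasDerivAt_hazard (q + x)).comp_const_add q x) (hazard_pos _).ne'
    refine monotoneOn_of_hasDerivWithinAt_nonneg (convex_Ici 0)
      (fun x _ => (hd x).continuousAt.continuousWithinAt)
      (fun x _ => (hd x).hasDerivWithinAt) ?_
    intro x hx
    rw [interior_Ici] at hx
    have hx : 0 < x := hx
    refine div_nonneg ?_ (sq_nonneg _)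
    have h1 := mul_hazard_le (z := q + x) (by linarith)
    have h2 := le_hazard (z := q + x) (by linarith)
    have h3 : x * (hazard (q + x) - (q + x)) ≤ 1 := by nlinarith
    nlinarith [hazard_pos (q + x)]
  have h := hmono (mem_Ici.2 hx) (mem_Ici.2 (hx.trans hxy)) hxy
  simp only at h
  rwa [div_le_div_iff₀ (hazard_pos _) (hazard_pos _)] at h

lemma iotaA_eq_hazard_sub (qa u : ℝ) : iotaA qa u = hazard (|qa| + u) - u := by
  have h : mills (u + |qa|) = exp ((|qa| + u) ^ 2 / 2) * gaussTail (|qa| + u) := by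
    rw [add_comm]; rfl
  rw [iotaA, h, hazard, neg_div, exp_neg, one_div, mul_inv, ← div_eq_mul_inv]

lemma abs_le_iotaA {qa u : ℝ} (hq : 0 < |qa|) (hu : 0 ≤ u) : |qa| ≤ iotaA qa u := by
  rw [iotaA_eq_hazard_sub]
  linarith [le_hazard (z := |qa| + u) (by linarith)]

lemma continuous_iotaA (qa : ℝ) : Continuous (iotaA qa) := by
  have h : Continuous hazard :=
    continuous_iff_continuousAt.2 fun z => (hasDerivAt_hazard z).continuousAt
  rw [funext (iotaA_eq_hazard_sub qa)]
  fun_prop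

lemma fal_zero (qa : ℝ) : fal qa 0 = 0 := by
  have h : Fal qa (|qa| + 0) = gaussTail |qa| / gaussTail |qa| := by rw [add_zero]; rfl
  rw [fal, h, div_self (gaussTail_pos _).ne', log_one]

lemma hasDerivAt_fal (qa x : ℝ) : HasDerivAt (fal qa) (-hazard (|qa| + x)) x := by
  have hc := gaussTail_pos |qa|
  have hx := gaussTail_pos (|qa| + x)
  have h : HasDerivAt (fun x => log (gaussTail (|qa| + x) / gaussTail |qa|))
      ((-exp (-(|qa| + x) ^ 2 / 2) / gaussTail |qa|) /
        (gaussTail (|qa| + x) / gaussTail |qa|)) x :=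
    ((hasDerivAt_gaussTail (|qa| + x)).comp_const_add |qa| x |>.div_const _).log
      (div_pos hx hc).ne'
  refine h.congr_deriv ?_
  rw [hazard]
  field_simp

lemma fal_le_tangent {qa x y : ℝ} (hq : 0 < |qa|) (hx : 0 ≤ x) (hy : 0 ≤ y) :
    fal qa x ≤ fal qa y - hazard (|qa| + y) * (x - y) := by
  have hc : Continuous (fal qa) :=
    continuous_iff_continuousAt.2 fun z => (hasDerivAt_fal qa z).continuousAt
  rcases lt_trichotomy x y with h | h | h
  · obtain ⟨c, hcm, he⟩ := exists_hasDerivAt_eq_slope (fal qa) _ h hc.continuousOn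
      (fun z _ => hasDerivAt_fal qa z)
    rw [eq_div_iff (sub_pos.2 h).ne'] at he
    have := monotoneOn_hazard (a := |qa| + c) (b := |qa| + y) (mem_Ioi.2 (by linarith [hcm.1]))
      (mem_Ioi.2 (by linarith)) (by linarith [hcm.2])
    nlinarith
  · simp [h]
  · obtain ⟨c, hcm, he⟩ := exists_hasDerivAt_eq_slope (fal qa) _ h hc.continuousOn
      (fun z _ => hasDerivAt_fal qa z)
    rw [eq_div_iff (sub_pos.2 h).ne'] at he
    have := monotoneOn_hazard (a := |qa| + y) (b := |qa| + c) (mem_Ioi.2 (by linarith))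
      (mem_Ioi.2 (by linarith [hcm.1])) (by linarith [hcm.1])
    nlinarith

lemma hazard_mul_sq_sub_sq_le {qa x y : ℝ} (hq : 0 < |qa|) (hx : 0 ≤ x) (hxy : x ≤ y) :
    hazard (|qa| + y) * (y ^ 2 - x ^ 2) ≤ 2 * y * (fal qa x - fal qa y) := by
  have hd : ∀ u, HasDerivAt (fun u => 2 * y * fal qa u + hazard (|qa| + y) * u ^ 2)
      (2 * y * -hazard (|qa| + u) + hazard (|qa| + y) * (2 * u)) u := fun u => by
    have h2 : HasDerivAt (fun u : ℝ => u ^ 2) (2 * u) u := by simpa using hasDerivAt_pow 2 u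
    exact ((hasDerivAt_fal qa u).const_mul _).add (h2.const_mul _)
  have hanti : AntitoneOn (fun u => 2 * y * fal qa u + hazard (|qa| + y) * u ^ 2) (Icc 0 y) := by
    refine antitoneOn_of_hasDerivWithinAt_nonpos (convex_Icc 0 y)
      (fun u _ => (hd u).continuousAt.continuousWithinAt)
      (fun u _ => (hd u).hasDerivWithinAt) ?_
    intro u hu
    rw [interior_Icc] at hu
    linarith [mul_hazard_le_mul_hazard hq hu.1.le hu.2.le]
  have h := hanti ⟨hx, hxy⟩ ⟨hx.trans hxy, le_rfl⟩ hxy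
  simp only at h
  nlinarith

lemma Vtot_eq_intervalIntegral (v : ℝ → ℝ) {t : ℝ} (ht : 0 ≤ t) :
    Vtot v t = ∫ s in (0 : ℝ)..t, v s :=
  (intervalIntegral.integral_of_le ht).symm

lemma integrableOn_Vtot {T : ℝ} {v : ℝ → ℝ} (hv : IntegrableOn v (Ioc 0 T)) :
    IntegrableOn (Vtot v) (Ioc 0 T) :=
  ((intervalIntegral.continuousOn_primitive
    ((integrableOn_Icc_iff_integrableOn_Ioc (by simp)).2 hv)).integrableOn_Icc).mono_set
      Ioc_subset_Icc_self

/-- Exchanging the order of integration in the integral of a primitive. -/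
lemma integral_Vtot {T : ℝ} (hT : 0 ≤ T) {v : ℝ → ℝ} (hv : IntegrableOn v (Ioc 0 T)) :
    ∫ t in Ioc 0 T, Vtot v t = T * Vtot v T - ∫ s in Ioc 0 T, s * v s := by
  have hvi : IntervalIntegrable v volume 0 T :=
    (intervalIntegrable_iff_integrableOn_Ioc_of_le hT).2 hv
  have hg := hvi.absolutelyContinuousOnInterval_intervalIntegral (c := 0) left_mem_uIcc
  have hf : AbsolutelyContinuousOnInterval (fun s : ℝ => s) 0 T :=
    contDiff_id.contDiffOn.absolutelyContinuousOnInterval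
  have h := hf.integral_mul_deriv_eq_deriv_mul hg
  have h1 : ∫ x in (0 : ℝ)..T, x * deriv (fun x => ∫ s in (0 : ℝ)..x, v s) x =
      ∫ x in (0 : ℝ)..T, x * v x := by
    refine intervalIntegral.integral_congr_ae ?_
    filter_upwards [hvi.ae_hasDerivAt_integral] with x hx hx2
    rw [(hx (uIoc_subset_uIcc hx2) 0 left_mem_uIcc).deriv]
  rw [h1] at h
  simp only [deriv_id'', one_mul, zero_mul, sub_zero] at h
  rw [intervalIntegral.integral_of_le hT,
    intervalIntegral.integral_of_le hT (f := fun x => ∫ s in (0 : ℝ)..x, v s)] at h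
  rw [Vtot_eq_intervalIntegral v hT, h, setIntegral_congr_fun measurableSet_Ioc
    fun t ht => Vtot_eq_intervalIntegral v (mem_Ioc.1 ht).1.le]
  ring

lemma sub_mul_pos {T k t : ℝ} (hT : 0 < T) (hk : k < 1) (ht : t ∈ Icc 0 T) : 0 < T - t * k := by
  rcases le_or_gt k 0 with h | h
  · nlinarith [ht.1]
  · nlinarith [ht.2]

lemma continuousOn_vk {T k : ℝ} (hT : 0 < T) (hk : k < 1) : ContinuousOn (vk T k) (Icc 0 T) := by
  refine continuousOn_const.div (by fun_prop) fun t ht => (sub_mul_pos hT hk ht).ne'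

lemma vk_pos {T k t : ℝ} (hT : 0 < T) (hk0 : 0 < k) (hk : k < 1) (ht : t ∈ Icc 0 T) :
    0 < vk T k t :=
  div_pos hk0 (sub_mul_pos hT hk ht)

lemma integrableOn_vk {T k : ℝ} (hT : 0 < T) (hk : k < 1) : IntegrableOn (vk T k) (Ioc 0 T) :=
  (continuousOn_vk hT hk).integrableOn_Icc.mono_set Ioc_subset_Icc_self

lemma Vtot_vk {T k t : ℝ} (hT : 0 < T) (hk : k < 1) (ht : t ∈ Icc 0 T) :
    Vtot (vk T k) t = log T - log (T - t * k) := by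
  have hsub : Icc 0 t ⊆ Icc 0 T := Icc_subset_Icc_right ht.2
  rw [Vtot_eq_intervalIntegral _ ht.1,
    intervalIntegral.integral_eq_sub_of_hasDerivAt (f := fun s => -log (T - s * k))]
  · simp
    ring
  · intro s hs
    rw [uIcc_of_le ht.1] at hs
    have h1 : HasDerivAt (fun s => T - s * k) (-(1 * k)) s :=
      ((hasDerivAt_id s).mul_const k).const_sub T
    refine (h1.log (sub_mul_pos hT hk (hsub hs)).ne').neg.congr_deriv ?_
    rw [vk]
    ring
  · refine ContinuousOn.intervalIntegrable ?_
    rw [uIcc_of_le ht.1]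
    exact (continuousOn_vk hT hk).mono hsub

lemma Vtot_vk_self {T k : ℝ} (hT : 0 < T) (hk : k < 1) : Vtot (vk T k) T = -log (1 - k) := by
  rw [Vtot_vk hT hk ⟨hT.le, le_rfl⟩, show T - T * k = T * (1 - k) by ring,
    log_mul hT.ne' (by linarith)]
  ring

lemma log_vk_sub_Vtot_vk {T k t : ℝ} (hT : 0 < T) (hk0 : 0 < k) (hk : k < 1)
    (ht : t ∈ Icc 0 T) : log (vk T k t) - Vtot (vk T k) t = log k - log T := by
  rw [Vtot_vk hT hk ht, vk, log_div hk0.ne' (sub_mul_pos hT hk ht).ne']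
  ring

lemma integral_log_vk {T k : ℝ} (hT : 0 < T) (hk0 : 0 < k) (hk : k < 1) :
    ∫ t in Ioc 0 T, (log (vk T k t) - Vtot (vk T k) t) = T * log k - T * log T := by
  rw [setIntegral_congr_fun (g := fun _ => log k - log T) measurableSet_Ioc
    fun t ht => log_vk_sub_Vtot_vk hT hk0 hk (Ioc_subset_Icc_self ht)]
  simp [hT.le]
  ring

lemma integrableOn_log {T : ℝ} {v : ℝ → ℝ} (hm : Measurable v)
    (hpos : ∀ t ∈ Icc (0 : ℝ) T, 0 < v t) (hv : IntegrableOn v (Ioc 0 T))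
    (hlog : IntegrableOn (fun t => max (-log (v t)) 0) (Ioc 0 T)) :
    IntegrableOn (fun t => log (v t)) (Ioc 0 T) := by
  refine Integrable.mono' (hv.add hlog) (measurable_log.comp hm).aestronglyMeasurable ?_
  refine (ae_restrict_mem measurableSet_Ioc).mono fun t ht => ?_
  have hp := hpos t (Ioc_subset_Icc_self ht)
  rw [Real.norm_eq_abs, Pi.add_apply, abs_le]
  constructor
  · linarith [le_max_left (-log (v t)) 0]
  · linarith [le_max_right (-log (v t)) 0, log_le_sub_one_of_pos hp]

/-- Among the consumption rates with a given total, the rate `vk` is optimal. -/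
lemma integral_log_sub_Vtot_le {T k : ℝ} (hT : 0 < T) (hk0 : 0 < k) (hk : k < 1) {v : ℝ → ℝ}
    (hm : Measurable v) (hpos : ∀ t ∈ Icc (0 : ℝ) T, 0 < v t) (hv : IntegrableOn v (Ioc 0 T))
    (hlog : IntegrableOn (fun t => max (-log (v t)) 0) (Ioc 0 T))
    (htot : Vtot v T = -log (1 - k)) :
    ∫ t in Ioc 0 T, (log (v t) - Vtot v t) ≤ T * log k - T * log T := by
  have hw := integrableOn_vk (T := T) hT hk
  have htot' := Vtot_vk_self hT hk
  have hs : ∀ {u : ℝ → ℝ}, IntegrableOn u (Ioc 0 T) → IntegrableOn (fun s => s * u s) (Ioc 0 T) :=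
    fun hu => (IntegrableOn.continuousOn_mul (K := Icc 0 T) (by fun_prop)
      ((integrableOn_Icc_iff_integrableOn_Ioc (by simp)).2 hu) isCompact_Icc).mono_set
        Ioc_subset_Icc_self
  have hc : Integrable (fun _ => log k - log T) (volume.restrict (Ioc 0 T)) :=
    integrable_const _
  have hIV := integrableOn_Vtot hv
  have hIW := integrableOn_Vtot hw
  have i1 : Integrable (fun t => Vtot (vk T k) t - Vtot v t) (volume.restrict (Ioc 0 T)) :=
    hIW.sub hIV
  have i2 : Integrable (fun t => T / k * (v t - vk T k t)) (volume.restrict (Ioc 0 T)) :=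
    (hv.sub hw).const_mul _
  have i3 : Integrable (fun t => t * v t - t * vk T k t) (volume.restrict (Ioc 0 T)) :=
    (hs hv).sub (hs hw)
  have i5 : Integrable (fun t => T / k * (v t - vk T k t) - (t * v t - t * vk T k t))
      (volume.restrict (Ioc 0 T)) := i2.sub i3
  have i4 : Integrable (fun t => (Vtot (vk T k) t - Vtot v t)
      + (T / k * (v t - vk T k t) - (t * v t - t * vk T k t))) (volume.restrict (Ioc 0 T)) :=
    i1.add i5
  have hle : ∫ t in Ioc 0 T, (log (v t) - Vtot v t) ≤ ∫ t in Ioc 0 T,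
      ((log k - log T) + ((Vtot (vk T k) t - Vtot v t)
        + (T / k * (v t - vk T k t) - (t * v t - t * vk T k t)))) := by
    refine setIntegral_mono_on ((integrableOn_log hm hpos hv hlog).sub hIV) ?_
      measurableSet_Ioc fun t ht => ?_
    · exact hc.add i4
    · have ht' := Ioc_subset_Icc_self ht
      have hvp := hpos t ht'
      have hwp := vk_pos hT hk0 hk ht'
      have h1 := log_le_sub_one_of_pos (div_pos hvp hwp)
      rw [log_div hvp.ne' hwp.ne'] at h1
      have h2 := log_vk_sub_Vtot_vk hT hk0 hk ht'
      have h3 : v t / vk T k t - 1 = T / k * (v t - vk T k t) - (t * v t - t * vk T k t) := by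
        have h4 : vk T k t * (T / k - t) = 1 := by
          rw [vk, div_mul_eq_mul_div, div_eq_one_iff_eq (sub_mul_pos hT hk ht').ne']
          field_simp
        have h5 : v t / vk T k t = v t * (T / k - t) := by
          rw [div_eq_iff hwp.ne', mul_assoc, mul_comm (T / k - t), h4, mul_one]
        rw [h5]
        linear_combination h4
      linarith
  refine hle.trans (le_of_eq ?_)
  rw [integral_add hc i4, integral_add i1 i5, integral_sub hIW hIV,
    integral_sub i2 i3, integral_const_mul, integral_sub hv hw, integral_sub (hs hv) (hs hw),
    integral_Vtot hT.le hv, integral_Vtot hT.le hw]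
  have e1 : ∫ t in Ioc 0 T, v t = -log (1 - k) := htot
  have e2 : ∫ t in Ioc 0 T, vk T k t = -log (1 - k) := htot'
  rw [htot, htot', e1, e2]
  simp [hT.le]
  ring

section Investment

variable {d : ℕ} {T : ℝ} {θ y w : ℝ → E d} {qa lam ρ : ℝ}

lemma one_le_om {t : ℝ} (ht : t ∈ Ioc 0 T) : 1 ≤ om T t := by
  unfold om
  linarith [ht.2]

lemma om_le {t : ℝ} (ht : t ∈ Ioc 0 T) : om T t ≤ T + 1 := by
  unfold om
  linarith [ht.1]

lemma continuous_om (T : ℝ) : Continuous (om T) := by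
  unfold om
  fun_prop

lemma IntegrableOn.om_mul {f : ℝ → ℝ} (hf : IntegrableOn f (Ioc 0 T)) :
    IntegrableOn (fun t => om T t * f t) (Ioc 0 T) :=
  (IntegrableOn.continuousOn_mul (K := Icc 0 T) (continuous_om T).continuousOn
    ((integrableOn_Icc_iff_integrableOn_Ioc (by simp)).2 hf) isCompact_Icc).mono_set
      Ioc_subset_Icc_self

lemma nrm_nonneg (y : ℝ → E d) (t : ℝ) : 0 ≤ nrm y t := Real.sqrt_nonneg _

lemma nrm_sq (y : ℝ → E d) (t : ℝ) : nrm y t ^ 2 = ∫ s in Ioc (0 : ℝ) t, ‖y s‖ ^ 2 :=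
  Real.sq_sqrt (integral_nonneg fun _ => sq_nonneg _)

lemma L2fun.integrableOn_inner (hy : L2fun T y) (hw : L2fun T w) :
    IntegrableOn (fun t => ⟪y t, w t⟫) (Ioc 0 T) := by
  refine Integrable.mono' (hy.2.add hw.2) (hy.1.inner hw.1).aestronglyMeasurable
    (Eventually.of_forall fun t => ?_)
  have h := norm_inner_le_norm (𝕜 := ℝ) (y t) (w t)
  simp only [Pi.add_apply]
  nlinarith [sq_nonneg (‖y t‖ - ‖w t‖), sq_nonneg ‖y t‖, sq_nonneg ‖w t‖]

/-- The Cauchy–Schwarz inequality for the running inner product. -/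
lemma ipr_le_nrm_mul_nrm (hy : L2fun T y) (hw : L2fun T w) :
    ipr y w T ≤ nrm y T * nrm w T := by
  have hquad : ∀ s : ℝ, 0 ≤ nrm y T ^ 2 * (s * s) + (-2 * ipr y w T) * s + nrm w T ^ 2 := by
    intro s
    have hi := (hy.integrableOn_inner hw).const_mul (-2 * s)
    have hy2 := hy.2.const_mul (s * s)
    have h0 : 0 ≤ ∫ t in Ioc 0 T, ((s * s * ‖y t‖ ^ 2 + -2 * s * ⟪y t, w t⟫) + ‖w t‖ ^ 2) := by
      refine integral_nonneg fun t => ?_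
      have := norm_sub_sq_real (s • y t) (w t)
      rw [norm_smul, mul_pow, Real.norm_eq_abs, sq_abs, inner_smul_left] at this
      simp only [conj_trivial] at this
      have h1 := sq_nonneg ‖s • y t - w t‖
      simp only [Pi.zero_apply]
      nlinarith
    have h12 : Integrable (fun t => s * s * ‖y t‖ ^ 2 + -2 * s * ⟪y t, w t⟫)
        (volume.restrict (Ioc 0 T)) := hy2.add hi
    rw [integral_add h12 hw.2, integral_add hy2 hi, integral_const_mul,
      integral_const_mul] at h0
    rw [nrm_sq, nrm_sq, ipr]
    linarith
  have h := discrim_le_zero hquad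
  rw [discrim] at h
  refine le_of_sq_le_sq ?_ (mul_nonneg (nrm_nonneg _ _) (nrm_nonneg _ _))
  nlinarith

lemma lam_mul_abs_le_den (hq : 0 < |qa|) (hlam : 0 < lam) {u : ℝ} (hu : 0 ≤ u) {o : ℝ}
    (ho : 0 ≤ o) : lam * |qa| ≤ lam * iotaA qa u + u * (o + lam) := by
  have h1 := mul_le_mul_of_nonneg_left (abs_le_iotaA hq hu) hlam.le
  nlinarith [mul_nonneg hu (add_nonneg ho hlam.le)]

lemma den_pos (hq : 0 < |qa|) (hlam : 0 < lam) {u : ℝ} (hu : 0 ≤ u) {o : ℝ} (ho : 0 ≤ o) :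
    0 < lam * iotaA qa u + u * (o + lam) :=
  (mul_pos hlam hq).trans_le (lam_mul_abs_le_den hq hlam hu ho)

lemma measurable_G1_integrand (hθm : Measurable θ) (u : ℝ) :
    Measurable fun t => (om T t + lam) ^ 2 * ‖θ t‖ ^ 2 /
      (lam * iotaA qa u + u * (om T t + lam)) ^ 2 := by
  have := (continuous_om T).measurable
  fun_prop

lemma G1_integrand_le (hq : 0 < |qa|) (hlam : 0 < lam) {u : ℝ} (hu : 0 ≤ u) {t : ℝ}
    (ht : t ∈ Ioc 0 T) :
    (om T t + lam) ^ 2 * ‖θ t‖ ^ 2 / (lam * iotaA qa u + u * (om T t + lam)) ^ 2 ≤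
      (T + 1 + lam) ^ 2 / (lam * |qa|) ^ 2 * ‖θ t‖ ^ 2 := by
  have h1 := one_le_om ht
  have h2 := om_le ht
  have h3 := lam_mul_abs_le_den hq hlam hu (zero_le_one.trans h1)
  have h4 := mul_pos hlam hq
  rw [div_mul_eq_mul_div]
  gcongr

lemma integrableOn_G1_integrand (hθ : L2fun T θ) (hq : 0 < |qa|) (hlam : 0 < lam) {u : ℝ}
    (hu : 0 ≤ u) : IntegrableOn (fun t => (om T t + lam) ^ 2 * ‖θ t‖ ^ 2 /
      (lam * iotaA qa u + u * (om T t + lam)) ^ 2) (Ioc 0 T) := by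
  refine Integrable.mono' (hθ.2.const_mul ((T + 1 + lam) ^ 2 / (lam * |qa|) ^ 2))
    (measurable_G1_integrand hθ.1 u).aestronglyMeasurable ?_
  refine (ae_restrict_mem measurableSet_Ioc).mono fun t ht => ?_
  rw [Real.norm_of_nonneg (by positivity)]
  exact G1_integrand_le hq hlam hu ht

lemma continuousOn_G1fun (hθ : L2fun T θ) (hq : 0 < |qa|) (hlam : 0 < lam) :
    ContinuousOn (fun u => G1fun T θ qa u lam) (Ici 0) := by
  refine continuousOn_of_dominated
    (bound := fun t => (T + 1 + lam) ^ 2 / (lam * |qa|) ^ 2 * ‖θ t‖ ^ 2)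
    (fun u _ => (measurable_G1_integrand hθ.1 u).aestronglyMeasurable) ?_
    (hθ.2.const_mul _) ?_
  · intro u hu
    refine (ae_restrict_mem measurableSet_Ioc).mono fun t ht => ?_
    rw [Real.norm_of_nonneg (by positivity)]
    exact G1_integrand_le hq hlam hu ht
  · refine (ae_restrict_mem measurableSet_Ioc).mono fun t ht => ?_
    have := continuous_iotaA qa
    refine ContinuousOn.div (by fun_prop) (by fun_prop) fun u hu => ?_
    exact pow_ne_zero 2 (den_pos hq hlam hu (zero_le_one.trans (one_le_om ht))).ne'

lemma G1fun_nrm_le_one (hθ : L2fun T θ) (hq : 0 < |qa|) (hlam : 0 < lam)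
    (hpos : 0 < nrm θ T) : G1fun T θ qa (nrm θ T) lam ≤ 1 := by
  have hle : G1fun T θ qa (nrm θ T) lam ≤ ∫ t in Ioc 0 T, (nrm θ T ^ 2)⁻¹ * ‖θ t‖ ^ 2 := by
    refine setIntegral_mono_on (integrableOn_G1_integrand hθ hq hlam hpos.le)
      (hθ.2.const_mul _) measurableSet_Ioc fun t ht => ?_
    have h1 := one_le_om ht
    have h2 : 0 < om T t + lam := by linarith
    have h3 : nrm θ T * (om T t + lam) ≤
        lam * iotaA qa (nrm θ T) + nrm θ T * (om T t + lam) := by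
      have := mul_pos hlam (hq.trans_le (abs_le_iotaA hq hpos.le))
      linarith
    rw [div_le_iff₀ (pow_pos (den_pos hq hlam hpos.le (zero_le_one.trans h1)) 2)]
    have h4 : (om T t + lam) ^ 2 * ‖θ t‖ ^ 2 =
        (nrm θ T ^ 2)⁻¹ * ‖θ t‖ ^ 2 * (nrm θ T * (om T t + lam)) ^ 2 := by
      field_simp
    rw [h4]
    gcongr
  rw [integral_const_mul, ← nrm_sq, inv_mul_cancel₀ (pow_pos hpos 2).ne'] at hle
  exact hle

/-- Either the multiplier yields no risky investment, or the norm equation `G₁ = 1` holds. -/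
lemma sig_eq_zero_or (hθ : L2fun T θ) (hq : 0 < |qa|) (hlam : 0 ≤ lam) (hpos : 0 < nrm θ T) :
    (∀ t, sig T θ qa lam t = 0) ∨ (0 < lam ∧ ∃ ρ, 0 < ρ ∧ G1fun T θ qa ρ lam = 1 ∧
      ∀ t, sig T θ qa lam t =
        ρ * (om T t + lam) / (lam * iotaA qa ρ + ρ * (om T t + lam))) := by
  set S := {u : ℝ | 0 ≤ u ∧ G1fun T θ qa u lam ≤ 1} with hS
  have hbdd : BddBelow S := ⟨0, fun u hu => hu.1⟩
  have hne : S.Nonempty := by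
    rcases hlam.eq_or_lt with h | h
    · refine ⟨0, le_rfl, ?_⟩
      simp [G1fun, ← h]
    · exact ⟨nrm θ T, hpos.le, G1fun_nrm_le_one hθ hq h hpos⟩
  have hinf : 0 ≤ sInf S := le_csInf hne fun u hu => hu.1
  have hrho : rho1 T θ qa lam = ENNReal.ofReal (sInf S) := if_pos hne
  have hsig : ∀ t, sig T θ qa lam t =
      sInf S * (om T t + lam) / (lam * iotaA qa (sInf S) + sInf S * (om T t + lam)) := by
    intro t
    rw [sig, hrho, if_neg ENNReal.ofReal_ne_top, ENNReal.toReal_ofReal hinf]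
  rcases hinf.eq_or_lt with h0 | h0
  · left
    intro t
    rw [hsig, ← h0, zero_mul, zero_div]
  right
  have hlam' : 0 < lam := by
    refine hlam.lt_of_ne fun h => h0.not_ge (csInf_le hbdd ⟨le_rfl, ?_⟩)
    simp [G1fun, ← h]
  have hcont := continuousOn_G1fun hθ hq hlam'
  refine ⟨hlam', sInf S, h0, le_antisymm ?_ ?_, hsig⟩
  · have hclosed : IsClosed S := hcont.preimage_isClosed_of_isClosed isClosed_Ici isClosed_Iic
    exact (hclosed.csInf_mem hne hbdd).2
  · have hlt : ∀ u ∈ Ico 0 (sInf S), 1 ≤ G1fun T θ qa u lam := fun u hu => by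
      by_contra hcon
      exact hu.2.not_ge (csInf_le hbdd ⟨hu.1, (not_le.1 hcon).le⟩)
    have hc : ContinuousWithinAt (fun u => G1fun T θ qa u lam) (Ico 0 (sInf S)) (sInf S) :=
      (hcont (sInf S) h0.le).mono fun u hu => hu.1
    have hcl : sInf S ∈ closure (Ico 0 (sInf S)) := by
      rw [closure_Ico h0.ne]
      exact ⟨h0.le, le_rfl⟩
    exact ContinuousWithinAt.closure_le hcl continuousWithinAt_const hc hlt

lemma measurable_sig (T : ℝ) (θ : ℝ → E d) (qa lam : ℝ) : Measurable (sig T θ qa lam) := by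
  have := (continuous_om T).measurable
  unfold sig
  split_ifs
  · exact measurable_const
  · fun_prop

lemma abs_sig_le_one (hθ : L2fun T θ) (hq : 0 < |qa|) (hlam : 0 ≤ lam) (hpos : 0 < nrm θ T)
    {t : ℝ} (ht : t ∈ Ioc 0 T) : |sig T θ qa lam t| ≤ 1 := by
  rcases sig_eq_zero_or hθ hq hlam hpos with h | ⟨hl, ρ, hρ, -, h⟩
  · simp [h t]
  · have h1 := one_le_om ht
    have h2 : 0 < om T t + lam := by linarith
    have h3 := den_pos hq hl hρ.le (zero_le_one.trans h1)
    rw [h t, abs_of_nonneg (by positivity), div_le_one h3]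
    have := mul_pos hl (hq.trans_le (abs_le_iotaA hq hρ.le))
    linarith

lemma L2fun_sig_smul (hθ : L2fun T θ) (hq : 0 < |qa|) (hlam : 0 ≤ lam) (hpos : 0 < nrm θ T) :
    L2fun T fun t => sig T θ qa lam t • θ t := by
  have hm : Measurable fun t => sig T θ qa lam t • θ t := (measurable_sig T θ qa lam).smul hθ.1
  refine ⟨hm, Integrable.mono' hθ.2 (hm.norm.pow_const 2).aestronglyMeasurable ?_⟩
  refine (ae_restrict_mem measurableSet_Ioc).mono fun t ht => ?_
  rw [Real.norm_of_nonneg (by positivity), norm_smul, mul_pow]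
  refine mul_le_of_le_one_left (sq_nonneg _) (pow_le_one₀ (norm_nonneg _) ?_)
  exact abs_sig_le_one hθ hq hlam hpos ht

lemma nrm_sig_smul (hρ : 0 < ρ) (hG : G1fun T θ qa ρ lam = 1)
    (hsig : ∀ t, sig T θ qa lam t =
      ρ * (om T t + lam) / (lam * iotaA qa ρ + ρ * (om T t + lam))) :
    nrm (fun t => sig T θ qa lam t • θ t) T = ρ := by
  have h : ∫ t in Ioc 0 T, ‖sig T θ qa lam t • θ t‖ ^ 2 = ρ ^ 2 * G1fun T θ qa ρ lam := by
    rw [G1fun, ← integral_const_mul]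
    congr 1
    funext t
    rw [norm_smul, mul_pow, Real.norm_eq_abs, sq_abs, hsig t, div_pow]
    generalize lam * iotaA qa ρ + ρ * (om T t + lam) = D
    ring
  rw [nrm, h, hG, mul_one, Real.sqrt_sq hρ.le]

/-- The norm equation bounds the multiplier. -/
lemma den_le_of_G1fun_eq_one (hT : 0 < T) (hθ : L2fun T θ) (hq : 0 < |qa|) (hlam : 0 < lam)
    (hρ : 0 < ρ) (hG : G1fun T θ qa ρ lam = 1) :
    lam * iotaA qa ρ + ρ * (T + 1 + lam) ≤ (T + 1 + lam) * nrm θ T := by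
  have hι := hq.trans_le (abs_le_iotaA hq hρ.le)
  have hD : 0 < lam * iotaA qa ρ + ρ * (T + 1 + lam) := by positivity
  set D := lam * iotaA qa ρ + ρ * (T + 1 + lam) with hDdef
  have hle : G1fun T θ qa ρ lam ≤ ∫ t in Ioc 0 T, ((T + 1 + lam) / D) ^ 2 * ‖θ t‖ ^ 2 := by
    refine setIntegral_mono_on (integrableOn_G1_integrand hθ hq hlam hρ.le)
      (hθ.2.const_mul _) measurableSet_Ioc fun t ht => ?_
    have h1 := one_le_om ht
    have h2 := om_le ht
    have h3 := den_pos hq hlam hρ.le (zero_le_one.trans h1)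
    have h4 : (om T t + lam) / (lam * iotaA qa ρ + ρ * (om T t + lam)) ≤ (T + 1 + lam) / D := by
      rw [div_le_div_iff₀ h3 hD, hDdef]
      nlinarith [mul_pos hlam hι]
    have h5 : (om T t + lam) ^ 2 * ‖θ t‖ ^ 2 / (lam * iotaA qa ρ + ρ * (om T t + lam)) ^ 2 =
        ((om T t + lam) / (lam * iotaA qa ρ + ρ * (om T t + lam))) ^ 2 * ‖θ t‖ ^ 2 := by
      rw [div_pow, div_mul_eq_mul_div]
    rw [h5]
    have h6 : 0 ≤ om T t + lam := by linarith
    gcongr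
  rw [hG, integral_const_mul, ← nrm_sq, ← mul_pow] at hle
  have h7 : 1 ≤ (T + 1 + lam) / D * nrm θ T := by
    refine le_of_sq_le_sq (by simpa using hle) ?_
    have := nrm_nonneg θ T
    positivity
  rwa [div_mul_eq_mul_div, le_div_iff₀ hD, one_mul] at h7

lemma two_mul_le_hazard_mul_sig (hT : 0 < T) (hθ : L2fun T θ) (hq : 0 < |qa|)
    (hqbig : 2 * (T + 1) * nrm θ T ≤ |qa|) (hlam : 0 < lam) (hρ : 0 < ρ)
    (hG : G1fun T θ qa ρ lam = 1)
    (hsig : ∀ t, sig T θ qa lam t =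
      ρ * (om T t + lam) / (lam * iotaA qa ρ + ρ * (om T t + lam)))
    {t : ℝ} (ht : t ∈ Ioc 0 T) : 2 * ρ ≤ hazard (|qa| + ρ) * sig T θ qa lam t := by
  have hD := den_le_of_G1fun_eq_one hT hθ hq hlam hρ hG
  have hι := abs_le_iotaA hq hρ.le
  have hιh := iotaA_eq_hazard_sub qa ρ
  have h1 := one_le_om ht
  have h3 := den_pos hq hlam hρ.le (zero_le_one.trans h1)
  have hh : hazard (|qa| + ρ) = iotaA qa ρ + ρ := by linarith
  rw [hsig t, hh, ← mul_div_assoc, le_div_iff₀ h3]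
  set ι := iotaA qa ρ
  set N := nrm θ T
  set o := om T t
  have hι0 : 0 < ι := hq.trans_le hι
  have hN0 : 0 ≤ N := nrm_nonneg θ T
  have hιN : 2 * (T + 1) * N ≤ ι := hqbig.trans hι
  have hρN : ρ < N := by
    by_contra hcon
    nlinarith [mul_pos hlam hι0, mul_nonneg (sub_nonneg.2 (not_lt.1 hcon))
      (by linarith : 0 ≤ T + 1 + lam)]
  have hTN : 0 < T * N := mul_pos hT (hρ.trans hρN)
  have hgap : 0 < ι + ρ - N := by nlinarith
  have hprod : 0 ≤ ι * (ι - (T + 2) * N) := mul_nonneg hι0.le (by nlinarith)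
  have h4 : (T + 1) * (N - ρ) * (ι + ρ) ≤ (ι - ρ) * (ι + ρ - N) := by
    have h5 : 0 ≤ ρ * ((T + 1) * ι - T * N) :=
      mul_nonneg hρ.le (by nlinarith)
    nlinarith [mul_pos hT (mul_pos hρ hρ)]
  have h6 : lam * (ι + ρ - N) ≤ (T + 1) * (N - ρ) := by nlinarith
  have h7 : lam * (ι + ρ) ≤ ι - ρ := by
    refine le_of_mul_le_mul_right ?_ hgap
    have := mul_le_mul_of_nonneg_right h6 (by linarith : 0 ≤ ι + ρ)
    nlinarith
  have h8 : 0 ≤ ι - ρ := le_trans (by positivity) h7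
  have h9 : lam * (ι + ρ) ≤ o * (ι - ρ) := by nlinarith
  nlinarith [mul_nonneg hρ.le (sub_nonneg.2 h9)]

end Investment

section Verification

variable {d : ℕ} {T : ℝ} {θ y : ℝ → E d} {qa lam : ℝ}

lemma ipr_sig_smul_add_fal (T : ℝ) (θ : ℝ → E d) (qa lam : ℝ) :
    ipr (fun t => sig T θ qa lam t • θ t) θ T +
      fal qa (nrm (fun t => sig T θ qa lam t • θ t) T) = -Phi1 T θ qa lam := by
  have h : ipr (fun t => sig T θ qa lam t • θ t) θ T =
      ∫ t in Ioc 0 T, sig T θ qa lam t * ‖θ t‖ ^ 2 := by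
    simp only [ipr, real_inner_smul_left, real_inner_self_eq_norm_sq]
  rw [h, Phi1, fal]
  ring

lemma L2fun.integrableOn_om_mul (hy : L2fun T y) (hθ : L2fun T θ) :
    IntegrableOn (fun t => om T t * (⟪y t, θ t⟫ - ‖y t‖ ^ 2 / 2)) (Ioc 0 T) :=
  IntegrableOn.om_mul ((hy.integrableOn_inner hθ).sub (hy.2.div_const 2))

lemma ipr_add_fal_le (hθ : L2fun T θ) (hq : 0 < |qa|) (hy : L2fun T y) :
    ipr y θ T + fal qa (nrm y T) ≤ (nrm θ T - |qa|) * nrm y T := by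
  have hn := nrm_nonneg y T
  have h1 := ipr_le_nrm_mul_nrm hy hθ
  have h2 := fal_le_tangent (y := 0) hq hn le_rfl
  rw [fal_zero, add_zero, sub_zero] at h2
  have h3 := le_hazard hq
  nlinarith

/-- Among the strategies satisfying the terminal constraint with the same slack, the
candidate strategy maximises the investment part of the cost. -/
lemma integral_om_mul_le (hθ : L2fun T θ) (hq : 0 < |qa|) (hqθ : nrm θ T < |qa|)
    (hpos : 0 < nrm θ T) (hlam : 0 ≤ lam) (hy : L2fun T y)
    (hfeas : -Phi1 T θ qa lam ≤ ipr y θ T + fal qa (nrm y T)) :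
    ∫ t in Ioc 0 T, om T t * (⟪y t, θ t⟫ - ‖y t‖ ^ 2 / 2) ≤
      ∫ t in Ioc 0 T, om T t * (⟪sig T θ qa lam t • θ t, θ t⟫ -
        ‖sig T θ qa lam t • θ t‖ ^ 2 / 2) := by
  have hw := L2fun_sig_smul (lam := lam) hθ hq hlam hpos
  rw [← ipr_sig_smul_add_fal] at hfeas
  rcases sig_eq_zero_or hθ hq hlam hpos with h | ⟨hl, ρ, hρ, hG, hsig⟩
  · simp only [h, zero_smul] at hfeas ⊢
    have h0 : ipr (fun _ => (0 : E d)) θ T = 0 := by simp [ipr]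
    have h1 : nrm (fun _ => (0 : E d)) T = 0 := by simp [nrm]
    rw [h0, h1, fal_zero, add_zero] at hfeas
    have h2 : nrm y T = 0 := by
      refine le_antisymm ?_ (nrm_nonneg y T)
      nlinarith [ipr_add_fal_le hθ hq hy]
    have h3 : ∫ t in Ioc 0 T, ‖y t‖ ^ 2 = 0 := by rw [← nrm_sq, h2]; simp
    rw [setIntegral_eq_zero_iff_of_nonneg_ae (Eventually.of_forall fun t => sq_nonneg _) hy.2] at h3
    refine (integral_congr_ae ?_).le
    filter_upwards [h3] with t ht
    have : y t = 0 := by simpa using ht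
    simp [this]
  · have hn := nrm_sig_smul hρ hG hsig
    have hι := hq.trans_le (abs_le_iotaA hq hρ.le)
    have hh : hazard (|qa| + ρ) = iotaA qa ρ + ρ := by linarith [iotaA_eq_hazard_sub qa ρ]
    set w := fun t => sig T θ qa lam t • θ t with hwdef
    obtain ⟨μ, hμ⟩ : ∃ μ, μ = lam * hazard (|qa| + ρ) / ρ := ⟨_, rfl⟩
    have hμρ : μ * ρ = lam * hazard (|qa| + ρ) := by rw [hμ, div_mul_cancel₀ _ hρ.ne']
    have hμ0 : 0 ≤ μ := by rw [hμ, hh]; positivity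
    have hint : ∀ u : ℝ → E d, L2fun T u → IntegrableOn (fun t =>
        om T t * (⟪u t, θ t⟫ - ‖u t‖ ^ 2 / 2) + (lam * ⟪u t, θ t⟫ - μ * ⟪u t, w t⟫)) (Ioc 0 T) ∧
        ∫ t in Ioc 0 T, (om T t * (⟪u t, θ t⟫ - ‖u t‖ ^ 2 / 2) +
          (lam * ⟪u t, θ t⟫ - μ * ⟪u t, w t⟫)) =
        (∫ t in Ioc 0 T, om T t * (⟪u t, θ t⟫ - ‖u t‖ ^ 2 / 2)) +
          (lam * ipr u θ T - μ * ipr u w T) := by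
      intro u hu
      have i1 := hu.integrableOn_om_mul hθ
      have i2 := (hu.integrableOn_inner hθ).const_mul lam
      have i3 := (hu.integrableOn_inner hw).const_mul μ
      have i4 : Integrable (fun t => lam * ⟪u t, θ t⟫ - μ * ⟪u t, w t⟫)
        (volume.restrict (Ioc 0 T)) := i2.sub i3
      refine ⟨i1.add i4, ?_⟩
      rw [integral_add i1 i4, integral_sub i2 i3, integral_const_mul, integral_const_mul]
      rfl
    have hle := setIntegral_mono_on (hint y hy).1 (hint w hw).1 measurableSet_Ioc fun t ht => by
      have ho := one_le_om ht
      have hD := den_pos hq hl hρ.le (zero_le_one.trans ho)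
      have hs : (μ + om T t) * sig T θ qa lam t = om T t + lam := by
        rw [hsig t, hμ, hh]
        have := hD.ne'
        field_simp
        ring
      have hsq := norm_sub_sq_real (y t) (sig T θ qa lam t • θ t)
      have h0 := sq_nonneg ‖y t - sig T θ qa lam t • θ t‖
      simp only [hwdef, real_inner_smul_left, real_inner_smul_right, real_inner_self_eq_norm_sq,
        norm_smul, mul_pow, Real.norm_eq_abs, sq_abs] at hsq ⊢
      have h1 : lam = (μ + om T t) * sig T θ qa lam t - om T t := by linarith
      have h2 := mul_nonneg (zero_le_one.trans ho) (hsq ▸ h0)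
      generalize sig T θ qa lam t = s at *
      rw [h1]
      linarith
    rw [(hint y hy).2, (hint w hw).2] at hle
    have hcs := ipr_le_nrm_mul_nrm hy hw
    have hww : ipr w w T = ρ ^ 2 := by
      rw [← hn, nrm_sq]
      simp only [ipr, real_inner_self_eq_norm_sq]
    have htan := fal_le_tangent hq (nrm_nonneg y T) hρ.le
    rw [hn] at hcs hfeas
    rw [hww] at hle
    have h1 : μ * ipr y w T ≤ lam * hazard (|qa| + ρ) * nrm y T := by
      rw [← hμρ]
      linarith [mul_le_mul_of_nonneg_left hcs hμ0]
    have h2 : μ * ρ ^ 2 = lam * hazard (|qa| + ρ) * ρ := by rw [← hμρ]; ring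
    have h3 := mul_le_mul_of_nonneg_left hfeas hl.le
    have h4 := mul_le_mul_of_nonneg_left htan hl.le
    linarith

/-- The terminal constraint is the most restrictive one for the candidate strategy. -/
lemma neg_Phi1_le_ipr_add_fal (hT : 0 < T) (hθ : L2fun T θ) (hq : 0 < |qa|)
    (hqbig : 2 * (T + 1) * nrm θ T ≤ |qa|) (hpos : 0 < nrm θ T) (hlam : 0 ≤ lam)
    {t : ℝ} (ht : t ∈ Icc 0 T) :
    -Phi1 T θ qa lam ≤ ipr (fun t => sig T θ qa lam t • θ t) θ t +
      fal qa (nrm (fun t => sig T θ qa lam t • θ t) t) := by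
  have hw := L2fun_sig_smul (lam := lam) hθ hq hlam hpos
  rw [← ipr_sig_smul_add_fal]
  rcases sig_eq_zero_or hθ hq hlam hpos with h | ⟨hl, ρ, hρ, hG, hsig⟩
  · simp [h, ipr, nrm]
  · have hn := nrm_sig_smul hρ hG hsig
    set w := fun t => sig T θ qa lam t • θ t with hwdef
    set h := hazard (|qa| + ρ)
    have hsplit : Ioc 0 t ∪ Ioc t T = Ioc 0 T := Ioc_union_Ioc_eq_Ioc ht.1 ht.2
    have hsub1 : Ioc 0 t ⊆ Ioc 0 T := Ioc_subset_Ioc_right ht.2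
    have hsub2 : Ioc t T ⊆ Ioc 0 T := Ioc_subset_Ioc_left ht.1
    have hi := hw.integrableOn_inner hθ
    have hI : ipr w θ T = ipr w θ t + ∫ s in Ioc t T, ⟪w s, θ s⟫ := by
      rw [ipr, ipr, ← hsplit, setIntegral_union (Ioc_disjoint_Ioc_of_le le_rfl) measurableSet_Ioc
        (hi.mono_set hsub1) (hi.mono_set hsub2)]
    have hN : nrm w T ^ 2 = nrm w t ^ 2 + ∫ s in Ioc t T, ‖w s‖ ^ 2 := by
      rw [nrm_sq, nrm_sq, ← hsplit, setIntegral_union (Ioc_disjoint_Ioc_of_le le_rfl)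
        measurableSet_Ioc (hw.2.mono_set hsub1) (hw.2.mono_set hsub2)]
    have hle : ∫ s in Ioc t T, 2 * ρ * ⟪w s, θ s⟫ ≤ ∫ s in Ioc t T, h * ‖w s‖ ^ 2 := by
      refine setIntegral_mono_on ((hi.mono_set hsub2).const_mul _)
        ((hw.2.mono_set hsub2).const_mul _) measurableSet_Ioc fun s hs => ?_
      have hs' := hsub2 hs
      have h1 := two_mul_le_hazard_mul_sig hT hθ hq hqbig hl hρ hG hsig hs'
      have h2 : 0 ≤ sig T θ qa lam s := by
        have ho := one_le_om hs'
        have := den_pos hq hl hρ.le (zero_le_one.trans ho)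
        rw [hsig s]
        positivity
      simp only [hwdef, real_inner_smul_left, real_inner_self_eq_norm_sq,
        norm_smul, mul_pow, Real.norm_eq_abs, sq_abs]
      have h3 := mul_le_mul_of_nonneg_right h1 (mul_nonneg h2 (sq_nonneg ‖θ s‖))
      linarith
    rw [integral_const_mul, integral_const_mul] at hle
    rw [hn] at hN ⊢
    have hmono : nrm w t ≤ ρ := by
      refine le_of_sq_le_sq ?_ hρ.le
      rw [hN]
      have : 0 ≤ ∫ s in Ioc t T, ‖w s‖ ^ 2 := integral_nonneg fun _ => sq_nonneg _
      linarith
    have hf := hazard_mul_sq_sub_sq_le hq (nrm_nonneg w t) hmono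
    rw [hN, add_sub_cancel_left] at hf
    rw [hI]
    have := hle.trans hf
    rw [mul_le_mul_iff_right₀ (by positivity)] at this
    linarith

end Verification

section Cost

variable {d : ℕ} {T k : ℝ} {θ y : ℝ → E d}

lemma admiss_vk (hT : 0 < T) (hk0 : 0 < k) (hk : k < 1) (hy : L2fun T y) :
    Admiss T y (vk T k) := by
  have hlog : ContinuousOn (fun t => max (-log (vk T k t)) 0) (Icc 0 T) :=
    (((continuousOn_vk hT hk).log fun t ht => (vk_pos hT hk0 hk ht).ne').neg).sup
      continuousOn_const
  refine ⟨hy.1, hy.2, ?_, fun t ht => vk_pos hT hk0 hk ht, integrableOn_vk hT hk,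
    hlog.integrableOn_Icc.mono_set Ioc_subset_Icc_self⟩
  unfold vk
  fun_prop

lemma Vtot_vk_le (hT : 0 < T) (hk0 : 0 ≤ k) (hk : k < 1) {t : ℝ} (ht : t ∈ Icc 0 T) :
    Vtot (vk T k) t ≤ -log (1 - k) := by
  have hT' : T ∈ Icc 0 T := ⟨hT.le, le_rfl⟩
  rw [← Vtot_vk_self hT hk, Vtot_vk hT hk ht, Vtot_vk hT hk hT']
  have := log_le_log (sub_mul_pos hT hk hT')
    (sub_le_sub_left (mul_le_mul_of_nonneg_right ht.2 hk0) T)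
  linarith

/-- The cost splits into a constant, an investment part and a consumption part. -/
lemma Jcost_eq (hθ : L2fun T θ) {r : ℝ → ℝ} (hr : IntegrableOn r (Ioc 0 T))
    (hy : L2fun T y) (x : ℝ) (v : ℝ → ℝ) :
    Jcost T x r θ y v = (T + 1) * log x + (∫ t in Ioc 0 T, om T t * r t) +
      (∫ t in Ioc 0 T, om T t * (⟪y t, θ t⟫ - ‖y t‖ ^ 2 / 2)) +
      (∫ t in Ioc 0 T, (log (v t) - Vtot v t)) - Vtot v T := by
  have h : ∫ t in Ioc 0 T, om T t * (r t + ⟪y t, θ t⟫ - ‖y t‖ ^ 2 / 2) =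
      (∫ t in Ioc 0 T, om T t * r t) +
        ∫ t in Ioc 0 T, om T t * (⟪y t, θ t⟫ - ‖y t‖ ^ 2 / 2) := by
    rw [← integral_add (IntegrableOn.om_mul hr) (hy.integrableOn_om_mul hθ)]
    congr 1
    funext t
    ring
  rw [Jcost, h]
  ring

lemma Gam1_eq (T : ℝ) (θ : ℝ → E d) (qa z : ℝ) (Finv : ℝ → ℝ) (k : ℝ) :
    Gam1 T θ qa z Finv k = log (1 - k) + T * log k + ∫ t in Ioc 0 T,
      om T t * (⟪ystarE T θ qa z Finv k t, θ t⟫ - ‖ystarE T θ qa z Finv k t‖ ^ 2 / 2) := by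
  rw [Gam1]
  congr 2
  funext t
  rw [ystarE, real_inner_smul_left, real_inner_self_eq_norm_sq, norm_smul, mul_pow,
    Real.norm_eq_abs, sq_abs]
  ring

end Cost

/-- Theorem 4.8 of the paper. -/
theorem stmt10 {d : ℕ} (hd : 1 ≤ d) {T : ℝ} (hT : 0 < T)
    (θ : ℝ → E d) (hθm : Measurable θ)
    (hθ2 : IntegrableOn (fun t => ‖θ t‖ ^ 2) (Set.Ioc 0 T))
    {a qa : ℝ} (ha0 : 0 < a) (ha2 : a < 1 / 2) (hqneg : qa < 0)
    (hquant : (∫ s in Set.Iic qa, Real.exp (-s ^ 2 / 2)) = a * Real.sqrt (2 * π))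
    (r : ℝ → ℝ) (hr : IntegrableOn r (Set.Ioc 0 T)) {x : ℝ} (hx : 0 < x)
    (hθpos : 0 < nrm θ T)
    {z : ℝ} (hz0 : 0 < z)
    (hz1 : z < 1 - Fal qa (|qa| + nrm θ T) * Real.exp (nrm θ T ^ 2))
    (hqbig : max 1 (2 * (T + 1) * nrm θ T) ≤ |qa|)
    (Finv : ℝ → ℝ)
    (hFinv : ∀ b : ℝ, 0 ≤ b → b ≤ -Real.log (1 - z) →
      Finv b ∈ Set.Icc 0 (lamMax' T θ qa) ∧ Phi1 T θ qa (Finv b) = b)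
    {γ : ℝ} (hγmem : γ ∈ Set.Ioc 0 z)
    (hγmax : ∀ k ∈ Set.Ioc (0:ℝ) z, Gam1 T θ qa z Finv k ≤ Gam1 T θ qa z Finv γ) :
    Admiss T (ystarE T θ qa z Finv γ) (vk T γ) ∧
    ESOK T θ (ystarE T θ qa z Finv γ) (vk T γ) qa z ∧
    Jcost T x r θ (ystarE T θ qa z Finv γ) (vk T γ) = Aconst T x r + Gam1 T θ qa z Finv γ ∧
    ∀ (y : ℝ → E d) (v : ℝ → ℝ), Admiss T y v → ESOK T θ y v qa z →
      Jcost T x r θ y v ≤ Aconst T x r + Gam1 T θ qa z Finv γ := by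
  have hq : 0 < |qa| := abs_pos.2 hqneg.ne
  have hq2 : 2 * (T + 1) * nrm θ T ≤ |qa| := (le_max_right _ _).trans hqbig
  have hqθ : nrm θ T < |qa| := by nlinarith
  have hθ : L2fun T θ := ⟨hθm, hθ2⟩
  have hz : z < 1 := by
    have : 0 < Fal qa (|qa| + nrm θ T) := div_pos (gaussTail_pos _) (gaussTail_pos _)
    nlinarith [mul_pos this (exp_pos (nrm θ T ^ 2))]
  have hlogz : 0 < 1 - z := by linarith
  have hslack : ∀ k ∈ Ioc 0 z, 0 ≤ Finv (log ((1 - k) / (1 - z))) ∧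
      Phi1 T θ qa (Finv (log ((1 - k) / (1 - z)))) = log (1 - k) - log (1 - z) := by
    intro k hk
    have hk1 : 0 < 1 - k := by linarith [hk.2]
    have h1 : log (1 - z) ≤ log (1 - k) := log_le_log hlogz (by linarith [hk.2])
    have h2 : log (1 - k) ≤ 0 := log_nonpos hk1.le (by linarith [hk.1])
    rw [log_div hk1.ne' hlogz.ne']
    have h3 := hFinv (log (1 - k) - log (1 - z)) (by linarith) (by linarith)
    exact ⟨h3.1.1, h3.2⟩
  have hγ1 : γ < 1 := hγmem.2.trans_lt hz
  obtain ⟨hl, hΦ⟩ := hslack γ hγmem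
  have hw : L2fun T (ystarE T θ qa z Finv γ) := L2fun_sig_smul hθ hq hl hθpos
  refine ⟨admiss_vk hT hγmem.1 hγ1 hw, fun t ht => ?_, ?_, fun y v hA hES => ?_⟩
  · have h1 : -Phi1 T θ qa (Finv (log ((1 - γ) / (1 - z)))) ≤
        ipr (ystarE T θ qa z Finv γ) θ t + fal qa (nrm (ystarE T θ qa z Finv γ) t) :=
      neg_Phi1_le_ipr_add_fal hT hθ hq hq2 hθpos hl ht
    have h2 := Vtot_vk_le hT hγmem.1.le hγ1 ht
    linarith
  · rw [Jcost_eq hθ hr hw, integral_log_vk hT hγmem.1 hγ1, Vtot_vk_self hT hγ1,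
      Gam1_eq, Aconst]
    ring
  · obtain ⟨hym, hy2, hvm, hvpos, hv, hlog⟩ := hA
    have hy : L2fun T y := ⟨hym, hy2⟩
    have hterm := hES T ⟨hT.le, le_rfl⟩
    have hVpos : 0 < Vtot v T := by
      rw [Vtot, setIntegral_pos_iff_support_of_nonneg_ae
        ((ae_restrict_mem measurableSet_Ioc).mono fun t ht =>
          (hvpos t (Ioc_subset_Icc_self ht)).le) hv]
      have hsupp : Ioc 0 T ⊆ Function.support v :=
        fun t ht => (hvpos t (Ioc_subset_Icc_self ht)).ne'
      rw [inter_eq_right.2 hsupp]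
      simpa using hT
    have hyθ := ipr_add_fal_le hθ hq hy
    have hn := nrm_nonneg y T
    obtain ⟨k, hk⟩ : ∃ k, k = 1 - exp (-Vtot v T) := ⟨_, rfl⟩
    have hlogk : log (1 - k) = -Vtot v T := by rw [hk, sub_sub_cancel, log_exp]
    have hk0 : 0 < k := by
      rw [hk, sub_pos, exp_lt_one_iff]
      linarith
    have hkz : k ≤ z := by
      have : 1 - z ≤ exp (-Vtot v T) := by
        rw [← log_le_iff_le_exp hlogz]
        nlinarith
      linarith
    have hk1 : k < 1 := hkz.trans_lt hz
    obtain ⟨hlk, hΦk⟩ := hslack k ⟨hk0, hkz⟩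
    have hinv := integral_om_mul_le hθ hq hqθ hθpos hlk hy (by rw [hΦk]; linarith)
    have hcons := integral_log_sub_Vtot_le hT hk0 hk1 hvm hvpos hv hlog (by linarith)
    have hmax := hγmax k ⟨hk0, hkz⟩
    rw [Gam1_eq T θ qa z Finv k] at hmax
    rw [Jcost_eq hθ hr hy, Aconst]
    simp only [ystarE] at hmax
    linarith
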